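/- Let P, Q, R be n×n real symmetric positive definite matrices satisfying the Riccati-like equation P·R·P + (1/2)·Tr(R·P)·P = Q, and let ρ > 0. Then for every x ∈ ℝⁿ the identity xᵀQx − xᵀPRPx + (1/2)·(2√ρ − xᵀPx)·Tr(R·P) = √ρ·Tr(R·P) holds. In particular, for the function V(x) := −(1/4)·(2√ρ − xᵀPx)² defined on the region {x : xᵀPx ≤ 2√ρ}, whose Hessian is ∇²V(x) = −2·P·x·xᵀ·P + (2√ρ − xᵀPx)·P, one has xᵀQx + (1/2)·Tr(R·∇²V(x)) = √ρ·Tr(R·P) for all x in that region. -/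

import Mathlib

open Matrix

/-!
Expanding the Riccati equation inside `xᵀQx` gives `xᵀPRPx + ½ Tr(RP) xᵀPx`, which leaves exactly
`√ρ Tr(RP)` in the first identity. Cyclicity of the trace turns `Tr(R P x xᵀ P)` into `xᵀPRPx`, so
`½ Tr(R ∇²V(x)) = -xᵀPRPx + ½ (2√ρ - xᵀPx) Tr(RP)` and the second identity is the first.
-/

section CommSemiring

variable {l m n α : Type*} [Fintype l] [Fintype m] [Fintype n] [CommSemiring α]

theorem dotProduct_add_smul_mulVec (A B : Matrix m n α) (t : α) (x : m → α) (y : n → α) :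
    x ⬝ᵥ (A + t • B) *ᵥ y = x ⬝ᵥ A *ᵥ y + t * (x ⬝ᵥ B *ᵥ y) := by
  rw [add_mulVec, dotProduct_add, smul_mulVec, dotProduct_smul, smul_eq_mul]

theorem trace_mul_vecMulVec_mul (A : Matrix l m α) (B : Matrix n l α) (x : m → α) (y : n → α) :
    trace (A * vecMulVec x y * B) = y ⬝ᵥ (B * A) *ᵥ x := by
  rw [trace_mul_comm, ← Matrix.mul_assoc, mul_vecMulVec, trace_vecMulVec, dotProduct_comm]

theorem trace_mul_smul_mul_vecMulVec_mul_add_smul (P : Matrix m n α) (R : Matrix n m α) (a b : α)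
    (x : n → α) (y : m → α) :
    trace (R * (a • (P * vecMulVec x y * P) + b • P)) =
      a * (y ⬝ᵥ (P * R * P) *ᵥ x) + b * trace (R * P) := by
  have trace_rank_one : trace (R * (P * vecMulVec x y * P)) = y ⬝ᵥ (P * R * P) *ᵥ x := by
    simpa only [Matrix.mul_assoc] using trace_mul_vecMulVec_mul (R * P) P x y
  rw [Matrix.mul_add, Matrix.mul_smul, Matrix.mul_smul, trace_add, trace_smul, trace_smul,
    trace_rank_one, smul_eq_mul, smul_eq_mul]

end CommSemiring

theorem stmt_16_general {n α : Type*} [Fintype n] [CommRing α] [Invertible (2 : α)]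
    {P Q R : Matrix n n α} (hric : P * R * P + (⅟2 * trace (R * P)) • P = Q)
    (s : α) (x : n → α) :
    x ⬝ᵥ Q *ᵥ x - x ⬝ᵥ (P * R * P) *ᵥ x + ⅟2 * (2 * s - x ⬝ᵥ P *ᵥ x) * trace (R * P) =
      s * trace (R * P) ∧
    x ⬝ᵥ Q *ᵥ x + ⅟2 * trace (R * ((-2 : α) • (P * vecMulVec x x * P) +
      (2 * s - x ⬝ᵥ P *ᵥ x) • P)) = s * trace (R * P) := by
  have half_mul_two : (⅟2 : α) * 2 = 1 := invOf_mul_self 2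
  have riccati_form :
      x ⬝ᵥ Q *ᵥ x = x ⬝ᵥ (P * R * P) *ᵥ x + ⅟2 * trace (R * P) * (x ⬝ᵥ P *ᵥ x) := by
    rw [← hric, dotProduct_add_smul_mulVec]
  have half_trace_hessian :
      ⅟2 * trace (R * ((-2 : α) • (P * vecMulVec x x * P) + (2 * s - x ⬝ᵥ P *ᵥ x) • P)) =
        -(x ⬝ᵥ (P * R * P) *ᵥ x) + ⅟2 * (2 * s - x ⬝ᵥ P *ᵥ x) * trace (R * P) := by
    rw [trace_mul_smul_mul_vecMulVec_mul_add_smul]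
    linear_combination -(x ⬝ᵥ (P * R * P) *ᵥ x) * half_mul_two
  have quadratic_identity : x ⬝ᵥ Q *ᵥ x - x ⬝ᵥ (P * R * P) *ᵥ x +
      ⅟2 * (2 * s - x ⬝ᵥ P *ᵥ x) * trace (R * P) = s * trace (R * P) := by
    rw [riccati_form]
    linear_combination s * trace (R * P) * half_mul_two
  refine ⟨quadratic_identity, ?_⟩
  rw [half_trace_hessian, ← add_assoc, ← sub_eq_add_neg, quadratic_identity]

/-- Let `P, Q, R` be `n×n` real symmetric positive definite
matrices satisfying `P·R·P + (1/2)·Tr(R·P)·P = Q` and let `ρ > 0`. Then for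
every `x ∈ ℝⁿ`,
`xᵀQx − xᵀPRPx + (1/2)·(2√ρ − xᵀPx)·Tr(R·P) = √ρ·Tr(R·P)`; in particular,
with the Hessian `∇²V(x) = −2·P·x·xᵀ·P + (2√ρ − xᵀPx)·P` of
`V(x) = −(1/4)(2√ρ − xᵀPx)²`, one has
`xᵀQx + (1/2)·Tr(R·∇²V(x)) = √ρ·Tr(R·P)` on the region `{x : xᵀPx ≤ 2√ρ}`. -/
theorem stmt_16 (n : ℕ) (P Q R : Matrix (Fin n) (Fin n) ℝ)
    (hPsym : Pᵀ = P) (hQsym : Qᵀ = Q) (hRsym : Rᵀ = R)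
    (hP : P.PosDef) (hQ : Q.PosDef) (hR : R.PosDef)
    (hric : P * R * P + ((1 : ℝ) / 2 * Matrix.trace (R * P)) • P = Q)
    (ρ : ℝ) (hρ : 0 < ρ) :
    (∀ x : Fin n → ℝ,
      x ⬝ᵥ Q *ᵥ x - x ⬝ᵥ (P * R * P) *ᵥ x +
        (1 / 2) * (2 * Real.sqrt ρ - x ⬝ᵥ P *ᵥ x) * Matrix.trace (R * P) =
      Real.sqrt ρ * Matrix.trace (R * P)) ∧
    (∀ x : Fin n → ℝ, x ⬝ᵥ P *ᵥ x ≤ 2 * Real.sqrt ρ →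
      x ⬝ᵥ Q *ᵥ x +
        (1 / 2) * Matrix.trace (R *
          ((-2 : ℝ) • (P * Matrix.vecMulVec x x * P) +
            (2 * Real.sqrt ρ - x ⬝ᵥ P *ᵥ x) • P)) =
      Real.sqrt ρ * Matrix.trace (R * P)) := by
  simp only [one_div, ← invOf_eq_inv] at hric ⊢
  exact ⟨fun x => (stmt_16_general hric √ρ x).1, fun x _ => (stmt_16_general hric √ρ x).2⟩
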